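/- arXiv:1905.07545 — 2 statements merged into one kernel-verified Lean document; each statement's English description precedes it below -/
import Mathlib

section
/- Assume ∫_0^T |a(t)| dt < ∞, and let h : ℝ^d → ℝ be twice continuously differentiable with h and all its partial derivatives up to order 2 bounded on ℝ^d. Then for all 0 ≤ r ≤ t ≤ T and all x ∈ ℝ^d, ∫_{ℝ^d} h(x+y) dν_{r,t}(y) = h(x) + ∫_r^t Σ_{i,j} a^{ij}(s) ( ∫_{ℝ^d} ∂_{x^i}∂_{x^j} h(x+y) dν_{s,t}(y) ) ds. -/
open MeasureTheory Set ENNReal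

noncomputable section

/-- The partial derivative `∂_{x^i} φ` of a function on `ℝ^d`. -/
def pd {d : ℕ} (i : Fin d) (φ : (Fin d → ℝ) → ℝ) : (Fin d → ℝ) → ℝ :=
  fun x => fderiv ℝ φ x (Pi.single i 1)

/-- `|a(t)| = max_{i,j} |a^{ij}(t)|`. -/
def aMax {d : ℕ} (a : ℝ → Fin d → Fin d → ℝ) (t : ℝ) : ℝ :=
  ⨆ i, ⨆ j, |a t i j|

/-- `ν s t` is the centered (possibly degenerate) Gaussian probability measure on `ℝ^d`
with covariance matrix `∫_s^t 2A(r) dr`, characterized by its characteristic function. -/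
def IsGaussianFamily {d : ℕ} (T : ℝ) (a : ℝ → Fin d → Fin d → ℝ)
    (ν : ℝ → ℝ → Measure (Fin d → ℝ)) : Prop :=
  ∀ s t : ℝ, 0 ≤ s → s ≤ t → t ≤ T →
    IsProbabilityMeasure (ν s t) ∧
    ∀ ξ : Fin d → ℝ,
      (∫ y, Complex.exp (Complex.I * ((∑ k, ξ k * y k : ℝ) : ℂ)) ∂(ν s t)) =
        Complex.exp (-(((∑ i, ∑ j, (∫ r in Ioc s t, 2 * a r i j) * ξ i * ξ j : ℝ) : ℂ)) / 2)

open Filter Topology in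
lemma exp_ftc (r t : ℝ) (q : ℝ → ℝ) (hq : IntervalIntegrable q volume r t) :
    Real.exp (-∫ u in r..t, q u) = 1 - ∫ s in r..t, q s * Real.exp (-∫ u in s..t, q u) := by
  set A : ℝ → ℝ := fun s => ∫ u in t..s, q u with hA
  have hAs : ∀ s, -∫ u in s..t, q u = A s := fun s => by
    rw [hA, intervalIntegral.integral_symm, neg_neg]
  have hac : AbsolutelyContinuousOnInterval A r t :=
    hq.absolutelyContinuousOnInterval_intervalIntegral (by simp)
  have hexp : AbsolutelyContinuousOnInterval (fun s => Real.exp (A s)) r t := by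
    obtain ⟨C, hC⟩ := hac.exists_bound
    have hlip : ∀ u ∈ uIcc r t, ∀ v ∈ uIcc r t,
        dist (Real.exp (A u)) (Real.exp (A v)) ≤ Real.exp C * dist (A u) (A v) := by
      intro u hu v hv
      have := Convex.norm_image_sub_le_of_norm_deriv_le (f := Real.exp) (s := Set.Iic C)
        (C := Real.exp C) (x := A v) (y := A u) (fun x _ => Real.differentiableAt_exp)
        (fun x hx => by simpa using hx) (convex_Iic C)
        ((le_abs_self _).trans (hC v hv)) ((le_abs_self _).trans (hC u hu))
      simpa [dist_eq_norm] using this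
    rw [absolutelyContinuousOnInterval_iff] at hac ⊢
    intro ε hε
    obtain ⟨δ, hδ, H⟩ := hac (ε / Real.exp C) (by positivity)
    refine ⟨δ, hδ, fun E hE hlt => ?_⟩
    have h1 := H E hE hlt
    have hE' := hE.1
    calc _ ≤ ∑ i ∈ Finset.range E.1, Real.exp C * dist (A (E.2 i).1) (A (E.2 i).2) := by
          refine Finset.sum_le_sum fun i hi => hlip _ (hE' i hi).1 _ (hE' i hi).2
      _ = Real.exp C * ∑ i ∈ Finset.range E.1, dist (A (E.2 i).1) (A (E.2 i).2) := by
          rw [Finset.mul_sum]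
      _ < Real.exp C * (ε / Real.exp C) := by gcongr
      _ = ε := by field_simp
  have h1 := hexp.integral_deriv_eq_sub
  simp only [hAs]
  have h2 : ∫ s in r..t, deriv (fun s => Real.exp (A s)) s = ∫ s in r..t, q s * Real.exp (A s) := by
    apply intervalIntegral.integral_congr_ae
    filter_upwards [hq.ae_hasDerivAt_integral] with x hx hxm
    have := (hx (uIoc_subset_uIcc hxm) t (by simp)).exp
    rw [this.deriv, mul_comm]
  rw [← h2, h1]
  simp [hA]

def Good {d : ℕ} (a : ℝ → Fin d → Fin d → ℝ) (ν : ℝ → ℝ → Measure (Fin d → ℝ)) (r t : ℝ)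
    (x : Fin d → ℝ) (h : (Fin d → ℝ) → ℝ) : Prop :=
  (∀ i j, AEStronglyMeasurable (fun s => ∫ y, pd i (pd j h) (x + y) ∂(ν s t))
    (volume.restrict (Ioc r t))) ∧
  (∫ y, h (x + y) ∂(ν r t)) =
        h x + ∫ s in Ioc r t,
          ∑ i, ∑ j, a s i j * ∫ y, pd i (pd j h) (x + y) ∂(ν s t)

open Filter Topology in
lemma Good.lim {d : ℕ} {a : ℝ → Fin d → Fin d → ℝ} {ν : ℝ → ℝ → Measure (Fin d → ℝ)} {r t : ℝ}
    {x : Fin d → ℝ} (hrt : r ≤ t) (ha : ∀ i j, IntegrableOn (fun s => a s i j) (Ioc r t))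
    (hν : ∀ s ∈ Icc r t, IsProbabilityMeasure (ν s t))
    {h : (Fin d → ℝ) → ℝ} {H : ℕ → (Fin d → ℝ) → ℝ} (C : ℝ)
    (hH : ∀ n, Continuous (H n)) (hH2 : ∀ n i j, Continuous (pd i (pd j (H n))))
    (hb : ∀ n x, |H n x| ≤ C) (hb2 : ∀ n i j x, |pd i (pd j (H n)) x| ≤ C)
    (hl : ∀ x, Tendsto (fun n => H n x) atTop (𝓝 (h x)))
    (hl2 : ∀ i j x, Tendsto (fun n => pd i (pd j (H n)) x) atTop (𝓝 (pd i (pd j h) x)))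
    (hG : ∀ n, Good a ν r t x (H n)) : Good a ν r t x h := by
  have key : ∀ i j, ∀ s ∈ Icc r t, Tendsto (fun n => ∫ y, pd i (pd j (H n)) (x + y) ∂(ν s t)) atTop
      (𝓝 (∫ y, pd i (pd j h) (x + y) ∂(ν s t))) := by
    intro i j s hs
    have := hν s hs
    refine tendsto_integral_of_dominated_convergence (fun _ => C) (fun n => ?_) (integrable_const C)
      (fun n => ae_of_all _ fun y => hb2 n i j _) (ae_of_all _ fun y => hl2 i j _)
    exact ((hH2 n i j).comp (continuous_const.add continuous_id)).aestronglyMeasurable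
  have hae : ∀ᵐ s ∂(volume.restrict (Ioc r t)), s ∈ Icc r t :=
    (ae_restrict_mem measurableSet_Ioc).mono fun s hs => Ioc_subset_Icc_self hs
  refine ⟨fun i j => aestronglyMeasurable_of_tendsto_ae atTop (fun n => (hG n).1 i j)
    (hae.mono fun s hs => key i j s hs), ?_⟩
  have hL : Tendsto (fun n => ∫ y, H n (x + y) ∂(ν r t)) atTop (𝓝 (∫ y, h (x + y) ∂(ν r t))) := by
    have := hν r ⟨le_rfl, hrt⟩
    refine tendsto_integral_of_dominated_convergence (fun _ => C) (fun n => ?_) (integrable_const C)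
      (fun n => ae_of_all _ fun y => hb n _) (ae_of_all _ fun y => hl _)
    exact ((hH n).comp (continuous_const.add continuous_id)).aestronglyMeasurable
  have hR : Tendsto (fun n => H n x + ∫ s in Ioc r t,
          ∑ i, ∑ j, a s i j * ∫ y, pd i (pd j (H n)) (x + y) ∂(ν s t)) atTop (𝓝 (h x + ∫ s in Ioc r t,
          ∑ i, ∑ j, a s i j * ∫ y, pd i (pd j h) (x + y) ∂(ν s t))) := by
    refine (hl x).add ?_
    refine tendsto_integral_of_dominated_convergence (fun s => ∑ i, ∑ j, |a s i j| * C)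
      (fun n => ?_) ?_ (fun n => ?_) ?_
    · refine Finset.aestronglyMeasurable_fun_sum _ fun i _ =>
        Finset.aestronglyMeasurable_fun_sum _ fun j _ => ?_
      exact (ha i j).aestronglyMeasurable.mul ((hG n).1 i j)
    · refine integrable_finsetSum _ fun i _ => integrable_finsetSum _ fun j _ => ?_
      exact (ha i j).abs.mul_const C
    · filter_upwards [hae] with s hs
      have := hν s hs
      refine (norm_sum_le _ _).trans (Finset.sum_le_sum fun i _ =>
        (norm_sum_le _ _).trans (Finset.sum_le_sum fun j _ => ?_))
      rw [norm_mul]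
      refine mul_le_mul_of_nonneg_left ?_ (norm_nonneg _)
      have := norm_integral_le_of_norm_le_const (μ := ν s t)
        (f := fun y => pd i (pd j (H n)) (x + y)) (C := C) (ae_of_all _ fun y => hb2 n i j _)
      simpa using this
    · filter_upwards [hae] with s hs
      exact tendsto_finsetSum _ fun i _ => tendsto_finsetSum _ fun j _ =>
        (key i j s hs).const_mul _
  simp only [(hG _).2] at hL
  exact tendsto_nhds_unique (hL.congr fun n => by rfl) hR |> fun e => by rw [e]

lemma integral_repr {d : ℕ} {Ω : Type*} [MeasurableSpace Ω] (μ : Measure Ω) [SFinite μ]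
    (η : Ω → Fin d → ℝ) (hη : Measurable η) (F : Ω → ℂ) (hF : Integrable F μ)
    (g : (Fin d → ℝ) → ℝ)
    (hrep : ∀ x, (g x : ℂ) = ∫ ω, Complex.exp (Complex.I * ((∑ k, η ω k * x k : ℝ) : ℂ)) * F ω ∂μ)
    (ρ : Measure (Fin d → ℝ)) [IsProbabilityMeasure ρ] (x : Fin d → ℝ) :
    ((∫ y, g (x + y) ∂ρ : ℝ) : ℂ) =
      ∫ ω, (∫ y, Complex.exp (Complex.I * ((∑ k, η ω k * y k : ℝ) : ℂ)) ∂ρ) *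
        (Complex.exp (Complex.I * ((∑ k, η ω k * x k : ℝ) : ℂ)) * F ω) ∂μ := by
  rw [← integral_complex_ofReal]
  simp only [hrep]
  rw [integral_integral_swap]
  · refine integral_congr_ae (ae_of_all _ fun ω => ?_)
    dsimp only
    rw [← integral_mul_const]
    refine integral_congr_ae (ae_of_all _ fun y => ?_)
    dsimp only
    rw [← mul_assoc, ← Complex.exp_add]
    congr 2
    simp only [Pi.add_apply, mul_add, Finset.sum_add_distrib, Complex.ofReal_add]
    ring
  · have h1 : Integrable (fun p : (Fin d → ℝ) × Ω => F p.2) (ρ.prod μ) := hF.comp_snd ρ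
    refine (h1.bdd_mul (c := 1) ?_ (ae_of_all _ fun p => ?_))
    · refine Measurable.aestronglyMeasurable ?_
      fun_prop
    · rw [Complex.norm_exp]
      simp

lemma good_of_repr {d : ℕ} {a : ℝ → Fin d → Fin d → ℝ} {ν : ℝ → ℝ → Measure (Fin d → ℝ)} {r t T : ℝ}
    (x : Fin d → ℝ) (h0r : 0 ≤ r) (hrt : r ≤ t) (htT : t ≤ T)
    (ha : ∀ i j, IntegrableOn (fun s => a s i j) (Ioc r t))
    (hν : IsGaussianFamily T a ν)
    {Ω : Type*} [MeasurableSpace Ω] (μ : Measure Ω) [SFinite μ]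
    (η : Ω → Fin d → ℝ) (hη : Measurable η) (F : Ω → ℂ) (hF : Integrable F μ)
    (hF2 : ∀ i j, Integrable (fun ω => -((η ω i : ℂ) * (η ω j : ℂ) * F ω)) μ)
    (h : (Fin d → ℝ) → ℝ)
    (hrep : ∀ x, (h x : ℂ) = ∫ ω, Complex.exp (Complex.I * ((∑ k, η ω k * x k : ℝ) : ℂ)) * F ω ∂μ)
    (hrep2 : ∀ i j x, (pd i (pd j h) x : ℂ) =
      ∫ ω, Complex.exp (Complex.I * ((∑ k, η ω k * x k : ℝ) : ℂ)) *
        (-((η ω i : ℂ) * (η ω j : ℂ) * F ω)) ∂μ) : Good a ν r t x h := by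
  set c : ℝ → ℝ := fun s => max r (min s t) with hc
  have hcc : Continuous c := by fun_prop
  have hcm : ∀ s, c s ∈ Icc r t := fun s => ⟨le_max_left _ _, max_le hrt (min_le_right _ _)⟩
  have hcs : ∀ s ∈ Icc r t, c s = s := fun s hs => by simp [hc, hs.1, hs.2]
  have hii : ∀ i j, IntervalIntegrable (fun s => a s i j) volume r t := fun i j =>
    (intervalIntegrable_iff_integrableOn_Ioc_of_le hrt).2 (ha i j)
  have hii' : ∀ i j, ∀ s ∈ Icc r t, IntervalIntegrable (fun s => a s i j) volume s t :=
    fun i j s hs => (hii i j).mono_set (by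
      rw [uIcc_of_le hs.2, uIcc_of_le hrt]; exact Icc_subset_Icc_left hs.1)
  set Φ : ℝ → (Fin d → ℝ) → ℝ := fun s ξ =>
    Real.exp (-∫ u in (c s)..t, ∑ i, ∑ j, a u i j * ξ i * ξ j) with hΦ
  have hsum : ∀ s ∈ Icc r t, ∀ ξ : Fin d → ℝ, ∫ u in s..t, ∑ i, ∑ j, a u i j * ξ i * ξ j =
      ∑ i, ∑ j, (∫ u in s..t, a u i j) * ξ i * ξ j := by
    intro s hs ξ
    rw [intervalIntegral.integral_finsetSum]
    · refine Finset.sum_congr rfl fun i _ => ?_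
      rw [intervalIntegral.integral_finsetSum]
      · refine Finset.sum_congr rfl fun j _ => ?_
        rw [intervalIntegral.integral_mul_const, intervalIntegral.integral_mul_const]
      · intro j _
        exact ((hii' i j s hs).mul_const _).mul_const _
    · intro i _
      have := IntervalIntegrable.sum (μ := volume) (a := s) (b := t) Finset.univ
        (f := fun j u => a u i j * ξ i * ξ j)
        (fun j _ => ((hii' i j s hs).mul_const _).mul_const _)
      simpa [Finset.sum_fn] using this
  have hchar : ∀ s ξ, (∫ y, Complex.exp (Complex.I * ((∑ k, ξ k * y k : ℝ) : ℂ)) ∂(ν (c s) t)) =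
      (Φ s ξ : ℂ) := by
    intro s ξ
    rw [(hν (c s) t (h0r.trans (hcm s).1) (hcm s).2 htT).2 ξ, hΦ]
    simp only
    rw [hsum _ (hcm s), Complex.ofReal_exp]
    congr 1
    simp only [intervalIntegral.integral_of_le (hcm s).2, integral_const_mul]
    push_cast
    rw [neg_div, Finset.sum_div]
    congr 1
    refine Finset.sum_congr rfl fun i _ => ?_
    rw [Finset.sum_div]
    refine Finset.sum_congr rfl fun j _ => ?_
    ring
  have hpr : ∀ s, IsProbabilityMeasure (ν (c s) t) := fun s =>
    (hν (c s) t (h0r.trans (hcm s).1) (hcm s).2 htT).1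
  have hΦb : ∀ s ξ, ‖(Φ s ξ : ℂ)‖ ≤ 1 := by
    intro s ξ
    have := hpr s
    rw [← hchar]
    have := norm_integral_le_of_norm_le_const (μ := ν (c s) t)
        (f := fun y => Complex.exp (Complex.I * ((∑ k, ξ k * y k : ℝ) : ℂ))) (C := 1)
        (ae_of_all _ fun y => by rw [Complex.norm_exp]; simp)
    simpa using this
  have hB : ∀ i j, Continuous fun s => ∫ u in (c s)..t, a u i j := by
    intro i j
    have h1 : ContinuousOn (fun s => ∫ u in t..s, a u i j) (Icc r t) := by
      have := intervalIntegral.continuousOn_primitive_interval' (a := t) (hii i j) (by simp)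
      rwa [uIcc_of_le hrt] at this
    have h2 := h1.comp_continuous hcc hcm
    simp only [intervalIntegral.integral_symm t] 
    exact h2.neg
  have hΦm : Measurable fun p : ℝ × Ω => Φ p.1 (η p.2) := by
    have : (fun p : ℝ × Ω => Φ p.1 (η p.2)) = fun p =>
        Real.exp (-∑ i, ∑ j, (∫ u in (c p.1)..t, a u i j) * η p.2 i * η p.2 j) := by
      funext p
      simp only [hΦ]
      rw [hsum _ (hcm _)]
    rw [this]
    have hBm := fun i j => (hB i j).measurable
    refine Real.measurable_exp.comp (Measurable.neg ?_)
    refine Finset.measurable_fun_sum _ fun i _ => Finset.measurable_fun_sum _ fun j _ => ?_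
    have h1 : Measurable fun p : ℝ × Ω => ∫ u in (c p.1)..t, a u i j :=
      (hBm i j).comp measurable_fst
    have h2 : Measurable fun p : ℝ × Ω => η p.2 := hη.comp measurable_snd
    exact (h1.mul ((measurable_pi_apply i).comp h2)).mul ((measurable_pi_apply j).comp h2)
  have hΦm' : Measurable fun p : ℝ × Ω => (Φ p.1 (η p.2) : ℂ) := Complex.measurable_ofReal.comp hΦm
  -- representation of the integrals
  set e : Ω → ℂ := fun ω => Complex.exp (Complex.I * ((∑ k, η ω k * x k : ℝ) : ℂ)) with he
  have hem : Measurable e := by fun_prop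
  have heb : ∀ ω, ‖e ω‖ ≤ 1 := fun ω => by rw [he]; simp only; rw [Complex.norm_exp]; simp
  have hI1 : ∀ s, ((∫ y, h (x + y) ∂(ν (c s) t) : ℝ) : ℂ) = ∫ ω, (Φ s (η ω) : ℂ) * (e ω * F ω) ∂μ := by
    intro s
    have := hpr s
    rw [integral_repr μ η hη F hF h hrep (ν (c s) t) x]
    simp only [hchar]; rfl
  have hI2 : ∀ i j s, ((∫ y, pd i (pd j h) (x + y) ∂(ν (c s) t) : ℝ) : ℂ) =
      ∫ ω, (Φ s (η ω) : ℂ) * (e ω * (-((η ω i : ℂ) * (η ω j : ℂ) * F ω))) ∂μ := by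
    intro i j s
    have := hpr s
    rw [integral_repr μ η hη _ (hF2 i j) _ (hrep2 i j) (ν (c s) t) x]
    simp only [hchar]; rfl
  have hcr : c r = r := hcs r ⟨le_rfl, hrt⟩
  -- integrability on the product
  have hprod : ∀ i j, Integrable (fun p : ℝ × Ω => (a p.1 i j : ℂ) * ((Φ p.1 (η p.2) : ℂ) *
      (e p.2 * (-((η p.2 i : ℂ) * (η p.2 j : ℂ) * F p.2)))))
      ((volume.restrict (Ioc r t)).prod μ) := by
    intro i j
    have h1 := ((ha i j).ofReal (𝕜 := ℂ)).mul_prod (hF2 i j)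
    have h2 := h1.bdd_mul (c := 1) (f := fun p : ℝ × Ω => (Φ p.1 (η p.2) : ℂ) * e p.2)
      (hΦm'.mul (hem.comp measurable_snd)).aestronglyMeasurable
      (ae_of_all _ fun p => by
        rw [norm_mul]; exact mul_le_one₀ (hΦb _ _) (norm_nonneg _) (heb _))
    refine h2.congr (ae_of_all _ fun p => ?_)
    simp only [RCLike.ofReal_eq_complex_ofReal]
    ring
  have hmeasC : ∀ i j, AEStronglyMeasurable (fun s => ∫ ω, (Φ s (η ω) : ℂ) *
      (e ω * (-((η ω i : ℂ) * (η ω j : ℂ) * F ω))) ∂μ) (volume.restrict (Ioc r t)) := by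
    intro i j
    refine AEStronglyMeasurable.integral_prod_right' (f := fun p : ℝ × Ω => (Φ p.1 (η p.2) : ℂ) *
      (e p.2 * (-((η p.2 i : ℂ) * (η p.2 j : ℂ) * F p.2)))) ?_
    refine hΦm'.aestronglyMeasurable.mul ((hem.comp measurable_snd).aestronglyMeasurable.mul ?_)
    exact (hF2 i j).aestronglyMeasurable.comp_snd
  refine ⟨fun i j => ?_, ?_⟩
  · refine (Complex.continuous_re.comp_aestronglyMeasurable (hmeasC i j)).congr ?_
    filter_upwards [ae_restrict_mem measurableSet_Ioc] with s hs
    have := hI2 i j s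
    rw [hcs s (Ioc_subset_Icc_self hs)] at this
    rw [← this, Complex.ofReal_re]
  · apply Complex.ofReal_injective
    have hL := hI1 r
    rw [hcr] at hL
    have hx : (h x : ℂ) = ∫ ω, e ω * F ω ∂μ := hrep x
    have hR : ((∫ s in Ioc r t, ∑ i, ∑ j, a s i j * ∫ y, pd i (pd j h) (x + y) ∂(ν s t) : ℝ) : ℂ) =
        ∫ s in Ioc r t, ∫ ω, ∑ i, ∑ j, (a s i j : ℂ) * ((Φ s (η ω) : ℂ) *
      (e ω * (-((η ω i : ℂ) * (η ω j : ℂ) * F ω)))) ∂μ := by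
      rw [← integral_complex_ofReal]
      have hae : ∀ᵐ s ∂(volume.restrict (Ioc r t)), ∀ i j, Integrable (fun ω =>
          (a s i j : ℂ) * ((Φ s (η ω) : ℂ) *
            (e ω * (-((η ω i : ℂ) * (η ω j : ℂ) * F ω))))) μ := by
        rw [ae_all_iff]; intro i
        rw [ae_all_iff]; intro j
        exact (hprod i j).prod_right_ae
      refine integral_congr_ae ?_
      filter_upwards [ae_restrict_mem measurableSet_Ioc, hae] with s hs hint
      rw [integral_finsetSum _ fun i _ => integrable_finsetSum _ fun j _ => hint i j]
      rw [Complex.ofReal_sum]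
      refine Finset.sum_congr rfl fun i _ => ?_
      rw [integral_finsetSum _ fun j _ => hint i j, Complex.ofReal_sum]
      refine Finset.sum_congr rfl fun j _ => ?_
      have := hI2 i j s
      rw [hcs s (Ioc_subset_Icc_self hs)] at this
      rw [Complex.ofReal_mul, this, integral_const_mul]
    have hprod' : Integrable (fun p : ℝ × Ω => ∑ i, ∑ j, (a p.1 i j : ℂ) * ((Φ p.1 (η p.2) : ℂ) *
      (e p.2 * (-((η p.2 i : ℂ) * (η p.2 j : ℂ) * F p.2)))))
      ((volume.restrict (Ioc r t)).prod μ) :=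
      integrable_finsetSum _ fun i _ => integrable_finsetSum _ fun j _ => hprod i j
    rw [Complex.ofReal_add, hR, hL, hx, integral_integral_swap hprod', ← integral_add]
    · refine integral_congr_ae (ae_of_all _ fun ω => ?_)
      dsimp only
      have hq : IntervalIntegrable (fun u => ∑ i, ∑ j, a u i j * η ω i * η ω j) volume r t := by
        rw [intervalIntegrable_iff_integrableOn_Ioc_of_le hrt]
        exact integrable_finsetSum _ fun i _ => integrable_finsetSum _ fun j _ =>
          ((ha i j).mul_const _).mul_const _
      have h1 := exp_ftc r t _ hq
      have h2 : Φ r (η ω) = 1 - ∫ s in Ioc r t,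
          (∑ i, ∑ j, a s i j * η ω i * η ω j) * Φ s (η ω) := by
        simp only [hΦ]
        rw [hcr, h1, intervalIntegral.integral_of_le hrt]
        congr 1
        refine setIntegral_congr_fun measurableSet_Ioc fun s hs => ?_
        rw [hcs s (Ioc_subset_Icc_self hs)]
      rw [h2, Complex.ofReal_sub, ← integral_complex_ofReal, Complex.ofReal_one, sub_mul, one_mul,
        sub_eq_add_neg, ← integral_mul_const, ← integral_neg]
      congr 1
      refine integral_congr_ae (ae_of_all _ fun s => ?_)
      dsimp only
      push_cast
      simp only [Finset.sum_mul, ← Finset.sum_neg_distrib]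
      refine Finset.sum_congr rfl fun i _ => Finset.sum_congr rfl fun j _ => ?_
      ring
    · exact hF.bdd_mul (c := 1) hem.aestronglyMeasurable (ae_of_all _ heb)
    · exact hprod'.integral_prod_right

open scoped ContDiff FourierTransform LineDeriv

def liftC {d : ℕ} (h : (Fin d → ℝ) → ℝ) : EuclideanSpace ℝ (Fin d) → ℂ :=
  fun v => ((h (EuclideanSpace.equiv (Fin d) ℝ v) : ℝ) : ℂ)

lemma liftC_supp {d : ℕ} {h : (Fin d → ℝ) → ℝ} (hs : HasCompactSupport h) :
    HasCompactSupport (liftC h) :=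
  (hs.comp_homeomorph (EuclideanSpace.equiv (Fin d) ℝ).toHomeomorph).comp_left (g := Complex.ofReal)
    Complex.ofReal_zero

lemma liftC_smooth {d : ℕ} {h : (Fin d → ℝ) → ℝ} (hs : ContDiff ℝ ∞ h) :
    ContDiff ℝ ∞ (liftC h) :=
  Complex.ofRealCLM.contDiff.comp (hs.comp (EuclideanSpace.equiv (Fin d) ℝ).contDiff)

def liftS {d : ℕ} (h : (Fin d → ℝ) → ℝ) (hs : HasCompactSupport h) (hc : ContDiff ℝ ∞ h) :
    SchwartzMap (EuclideanSpace ℝ (Fin d)) ℂ :=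
  (liftC_supp hs).toSchwartzMap (liftC_smooth hc)

lemma pd_supp {d : ℕ} {h : (Fin d → ℝ) → ℝ} (hs : HasCompactSupport h) (i : Fin d) :
    HasCompactSupport (pd i h) := hs.fderiv_apply ℝ _

lemma pd_smooth {d : ℕ} {h : (Fin d → ℝ) → ℝ} (hs : ContDiff ℝ ∞ h) (i : Fin d) :
    ContDiff ℝ ∞ (pd i h) := 
  (hs.fderiv_right (m := ∞) (by simp)).clm_apply contDiff_const

lemma liftS_pd {d : ℕ} (h : (Fin d → ℝ) → ℝ) (hs : HasCompactSupport h) (hc : ContDiff ℝ ∞ h)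
    (i : Fin d) : liftS (pd i h) (pd_supp hs i) (pd_smooth hc i) =
      ∂_{EuclideanSpace.single i (1 : ℝ)} (liftS h hs hc) := by
  ext v
  rw [SchwartzMap.lineDerivOp_apply_eq_fderiv]
  have h1 : HasFDerivAt (liftC h) (Complex.ofRealCLM.comp
      ((fderiv ℝ h (EuclideanSpace.equiv (Fin d) ℝ v)).comp
        (EuclideanSpace.equiv (Fin d) ℝ).toContinuousLinearMap)) v := by
    have h2 := (hc.differentiable (by simp) (EuclideanSpace.equiv (Fin d) ℝ v)).hasFDerivAt
    exact Complex.ofRealCLM.hasFDerivAt.comp v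
      (h2.comp v (EuclideanSpace.equiv (Fin d) ℝ).hasFDerivAt)
  have h3 : fderiv ℝ (liftS h hs hc) v = _ := h1.fderiv
  rw [h3]
  change ((pd i h (EuclideanSpace.equiv (Fin d) ℝ v) : ℝ) : ℂ) = _
  simp only [pd, ContinuousLinearMap.comp_apply]
  rfl

lemma fourier_pd {d : ℕ} (h : (Fin d → ℝ) → ℝ) (hs : HasCompactSupport h) (hc : ContDiff ℝ ∞ h)
    (i : Fin d) (ξ : EuclideanSpace ℝ (Fin d)) :
    𝓕 (liftS (pd i h) (pd_supp hs i) (pd_smooth hc i)) ξ =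
      Complex.I * ((2 * Real.pi * ξ i : ℝ) : ℂ) * 𝓕 (liftS h hs hc) ξ := by
  rw [liftS_pd h hs hc, SchwartzMap.fourier_lineDerivOp_eq]
  have : (fun y : EuclideanSpace ℝ (Fin d) => inner ℝ y (EuclideanSpace.single i (1 : ℝ))).HasTemperateGrowth :=
    ((innerSL ℝ).flip (EuclideanSpace.single i (1 : ℝ))).hasTemperateGrowth
  have h2 : inner ℝ ξ (EuclideanSpace.single i (1 : ℝ)) = ξ i := by
    simp [EuclideanSpace.inner_single_right]
  simp only [smul_apply, SchwartzMap.smulLeftCLM_apply_apply this, h2, smul_eq_mul,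
    Complex.real_smul]
  push_cast
  ring

lemma inv_repr {d : ℕ} (h : (Fin d → ℝ) → ℝ) (hs : HasCompactSupport h) (hc : ContDiff ℝ ∞ h)
    (x : Fin d → ℝ) : (h x : ℂ) = ∫ ξ : EuclideanSpace ℝ (Fin d),
      Complex.exp (Complex.I * ((∑ k, (2 * Real.pi * ξ k) * x k : ℝ) : ℂ)) *
        𝓕 (liftS h hs hc) ξ := by
  have h1 : 𝓕⁻ (𝓕 (liftS h hs hc)) = liftS h hs hc := FourierTransform.fourierInv_fourier_eq _
  have h2 := congrArg (fun f => f ((EuclideanSpace.equiv (Fin d) ℝ).symm x)) h1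
  have h3 : (liftS h hs hc) ((EuclideanSpace.equiv (Fin d) ℝ).symm x) = (h x : ℂ) := by
    change ((h (EuclideanSpace.equiv (Fin d) ℝ ((EuclideanSpace.equiv (Fin d) ℝ).symm x)) : ℝ) : ℂ) = _
    rw [ContinuousLinearEquiv.apply_symm_apply]
  rw [h3, SchwartzMap.fourierInv_coe, Real.fourierInv_eq'] at h2
  rw [← h2]
  refine integral_congr_ae (ae_of_all _ fun ξ => ?_)
  dsimp only
  rw [smul_eq_mul]
  congr 2
  rw [mul_comm]
  congr 2
  simp [PiLp.inner_apply, Finset.mul_sum]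
  refine Finset.sum_congr rfl fun k _ => ?_
  ring

lemma good_smooth {d : ℕ} {a : ℝ → Fin d → Fin d → ℝ} {ν : ℝ → ℝ → Measure (Fin d → ℝ)} {r t T : ℝ}
    (x : Fin d → ℝ) (h0r : 0 ≤ r) (hrt : r ≤ t) (htT : t ≤ T)
    (ha : ∀ i j, IntegrableOn (fun s => a s i j) (Ioc r t))
    (hν : IsGaussianFamily T a ν)
    (h : (Fin d → ℝ) → ℝ) (hs : HasCompactSupport h) (hc : ContDiff ℝ ∞ h) :
    Good a ν r t x h := by
  have key : ∀ i j (ξ : EuclideanSpace ℝ (Fin d)),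
      𝓕 (liftS (pd i (pd j h)) (pd_supp (pd_supp hs j) i) (pd_smooth (pd_smooth hc j) i)) ξ =
      -(((2 * Real.pi * ξ i : ℝ) : ℂ) * ((2 * Real.pi * ξ j : ℝ) : ℂ) * 𝓕 (liftS h hs hc) ξ) := by
    intro i j ξ
    rw [fourier_pd _ (pd_supp hs j) (pd_smooth hc j), fourier_pd _ hs hc]
    linear_combination (((2 * Real.pi * ξ i : ℝ) : ℂ) * ((2 * Real.pi * ξ j : ℝ) : ℂ) *
      𝓕 (liftS h hs hc) ξ) * Complex.I_mul_I
  refine good_of_repr x h0r hrt htT ha hν (volume : Measure (EuclideanSpace ℝ (Fin d)))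
    (fun ξ k => 2 * Real.pi * ξ k) (by fun_prop) (fun ξ => 𝓕 (liftS h hs hc) ξ)
    (SchwartzMap.integrable _) ?_ h ?_ ?_
  · intro i j
    simp only [← key]
    exact SchwartzMap.integrable _
  · exact inv_repr h hs hc
  · intro i j x
    simp only [← key]
    exact inv_repr _ _ _ x

open scoped Convolution
open ContinuousLinearMap (lsmul)

lemma pd_conv {d : ℕ} {f g : (Fin d → ℝ) → ℝ} (hf : LocallyIntegrable f) (hg : ContDiff ℝ 1 g)
    (hs : HasCompactSupport g) (i : Fin d) :
    pd i (f ⋆[lsmul ℝ ℝ, volume] g) = f ⋆[lsmul ℝ ℝ, volume] (pd i g) := by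
  funext x
  have h1 := (hs.hasFDerivAt_convolution_right (lsmul ℝ ℝ) hf hg x).fderiv
  unfold pd
  rw [h1, convolution_precompR_apply _ hf (hs.fderiv ℝ) (hg.continuous_fderiv one_ne_zero)]

lemma pd_contDiff {d : ℕ} {h : (Fin d → ℝ) → ℝ} {n m : ℕ} (hs : ContDiff ℝ n h) (hm : m + 1 ≤ n)
    (i : Fin d) : ContDiff ℝ m (pd i h) :=
  (hs.fderiv_right (m := m) (by exact_mod_cast hm)).clm_apply contDiff_const

open Filter Topology in
lemma good_compact {d : ℕ} {a : ℝ → Fin d → Fin d → ℝ} {ν : ℝ → ℝ → Measure (Fin d → ℝ)} {r t T : ℝ}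
    (x : Fin d → ℝ) (h0r : 0 ≤ r) (hrt : r ≤ t) (htT : t ≤ T)
    (ha : ∀ i j, IntegrableOn (fun s => a s i j) (Ioc r t))
    (hν : IsGaussianFamily T a ν)
    (h : (Fin d → ℝ) → ℝ) (hs : HasCompactSupport h) (hc : ContDiff ℝ 2 h) :
    Good a ν r t x h := by
  let φ : ℕ → ContDiffBump (0 : Fin d → ℝ) := fun n =>
    ⟨1 / (2 * ((n : ℝ) + 1)), 1 / ((n : ℝ) + 1), by positivity, by
      apply one_div_lt_one_div_of_lt (by positivity); linarith [(Nat.cast_nonneg n : (0 : ℝ) ≤ n)]⟩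
  have hφ : Tendsto (fun n => (φ n).rOut) atTop (𝓝 0) := tendsto_one_div_add_atTop_nhds_zero_nat
  let H : ℕ → (Fin d → ℝ) → ℝ := fun n => (φ n).normed volume ⋆[lsmul ℝ ℝ, volume] h
  have hli : ∀ n, LocallyIntegrable ((φ n).normed volume : (Fin d → ℝ) → ℝ) := fun n =>
    (φ n).continuous_normed.locallyIntegrable
  have hc1 : ∀ j, ContDiff ℝ 1 (pd j h) := fun j => pd_contDiff (n := 2) (m := 1) hc le_rfl j
  have hc2 : ∀ i j, Continuous (pd i (pd j h)) := fun i j =>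
    (pd_contDiff (n := 1) (m := 0) (hc1 j) le_rfl i).continuous
  have hpd : ∀ n i j, pd i (pd j (H n)) =
      (φ n).normed volume ⋆[lsmul ℝ ℝ, volume] (pd i (pd j h)) := by
    intro n i j
    simp only [H]
    rw [pd_conv (hli n) (hc.of_le (by norm_num)) hs, pd_conv (hli n) (hc1 j) (pd_supp hs j)]
  have hsm : ∀ n, ContDiff ℝ ∞ (H n) := fun n =>
    (φ n).hasCompactSupport_normed.contDiff_convolution_left _ (φ n).contDiff_normed
      hc.continuous.locallyIntegrable
  have hsu : ∀ n, HasCompactSupport (H n) := fun n =>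
    (φ n).hasCompactSupport_normed.convolution _ hs
  have hbd : ∀ (g : (Fin d → ℝ) → ℝ) (C : ℝ), Continuous g → (∀ x, |g x| ≤ C) → ∀ n x,
      |((φ n).normed volume ⋆[lsmul ℝ ℝ, volume] g) x| ≤ 3 * C := by
    intro g C hg hC n x
    have h1 := (φ n).dist_normed_convolution_le (μ := volume) (x₀ := x) (ε := 2 * C)
      hg.aestronglyMeasurable (fun y _ => by
        rw [Real.dist_eq]
        have := abs_sub (g y) (g x)
        linarith [hC x, hC y])
    rw [Real.dist_eq] at h1
    have h2 := abs_sub_abs_le_abs_sub (((φ n).normed volume ⋆[lsmul ℝ ℝ, volume] g) x) (g x)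
    linarith [hC x]
  have hexb : ∀ (g : (Fin d → ℝ) → ℝ), Continuous g → HasCompactSupport g → ∃ C, ∀ x, |g x| ≤ C := by
    intro g hg hgs
    obtain ⟨C, hC⟩ := hgs.exists_bound_of_continuous hg
    exact ⟨C, hC⟩
  obtain ⟨C0, hC0⟩ := hexb h hc.continuous hs
  choose C2 hC2 using fun i j => hexb (pd i (pd j h)) (hc2 i j) (pd_supp (pd_supp hs j) i)
  have hC2n : ∀ i j, 0 ≤ C2 i j := fun i j => (abs_nonneg _).trans (hC2 i j 0)
  have hC0n : 0 ≤ C0 := (abs_nonneg _).trans (hC0 0)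
  have hSn : 0 ≤ ∑ i, ∑ j, C2 i j := Finset.sum_nonneg fun i _ => Finset.sum_nonneg fun j _ => hC2n i j
  have hS : ∀ i j, C2 i j ≤ ∑ i, ∑ j, C2 i j := fun i j =>
    (Finset.single_le_sum (f := fun j => C2 i j) (fun j _ => hC2n i j) (Finset.mem_univ j)).trans
    (Finset.single_le_sum (f := fun i => ∑ j, C2 i j)
      (fun i _ => Finset.sum_nonneg fun j _ => hC2n i j) (Finset.mem_univ i))
  refine Good.lim (H := H) hrt ha (fun s hs => (hν s t (h0r.trans hs.1) hs.2 htT).1)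
    (3 * (C0 + ∑ i, ∑ j, C2 i j)) (fun n => (hsm n).continuous)
    (fun n i j => (pd_smooth (pd_smooth (hsm n) j) i).continuous) ?_ ?_ ?_ ?_ ?_
  · intro n x
    exact (hbd h C0 hc.continuous hC0 n x).trans (by linarith)
  · intro n i j x
    rw [hpd]
    exact (hbd _ (C2 i j) (hc2 i j) (hC2 i j) n x).trans (by linarith [hS i j])
  · intro x
    exact ContDiffBump.convolution_tendsto_right_of_continuous hφ hc.continuous x
  · intro i j x
    simp only [hpd]
    exact ContDiffBump.convolution_tendsto_right_of_continuous hφ (hc2 i j) x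
  · intro n
    exact good_smooth x h0r hrt htT ha hν _ (hsu n) (hsm n)

lemma pd_pd_le {d : ℕ} {h : (Fin d → ℝ) → ℝ} (hc : ContDiff ℝ 2 h) (i j : Fin d) (x : Fin d → ℝ) :
    |pd i (pd j h) x| ≤ ‖iteratedFDeriv ℝ 2 h x‖ := by
  have h1 : pd i (pd j h) x = iteratedFDeriv ℝ 2 h x ![Pi.single i 1, Pi.single j 1] := by
    rw [iteratedFDeriv_two_apply]
    simp only [pd, Matrix.cons_val_zero, Matrix.cons_val_one]
    have : DifferentiableAt ℝ (fderiv ℝ h) x :=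
      (hc.fderiv_right (m := 1) (by norm_num)).differentiable (by norm_num) x
    have h3 := (this.hasFDerivAt.clm_apply
      (hasFDerivAt_const (Pi.single j (1 : ℝ) : Fin d → ℝ) x)).fderiv
    have h4 : pd j h = fun y => fderiv ℝ h y (Pi.single j (1 : ℝ)) := rfl
    rw [h4, h3]
    simp
  rw [h1, ← Real.norm_eq_abs]
  refine (ContinuousMultilinearMap.le_opNorm _ _).trans ?_
  have hn : ∀ k : Fin d, ‖(Pi.single k (1 : ℝ) : Fin d → ℝ)‖ = 1 := fun k => by
    rw [Pi.norm_single, norm_one]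
  simp [Fin.prod_univ_two, hn]

open Filter Topology in
lemma good_bdd {d : ℕ} {a : ℝ → Fin d → Fin d → ℝ} {ν : ℝ → ℝ → Measure (Fin d → ℝ)} {r t T : ℝ}
    (x : Fin d → ℝ) (h0r : 0 ≤ r) (hrt : r ≤ t) (htT : t ≤ T)
    (ha : ∀ i j, IntegrableOn (fun s => a s i j) (Ioc r t))
    (hν : IsGaussianFamily T a ν)
    (h : (Fin d → ℝ) → ℝ) (hc : ContDiff ℝ 2 h)
    (hb : ∀ n : ℕ, n ≤ 2 → ∃ C : ℝ, ∀ x, ‖iteratedFDeriv ℝ n h x‖ ≤ C) :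
    Good a ν r t x h := by
  let χ : ContDiffBump (0 : Fin d → ℝ) := ⟨1, 2, by norm_num, by norm_num⟩
  let L : ℕ → (Fin d → ℝ) →L[ℝ] (Fin d → ℝ) := fun n =>
    (1 / ((n : ℝ) + 1)) • ContinuousLinearMap.id ℝ (Fin d → ℝ)
  have hLn : ∀ n, ‖L n‖ ≤ 1 := by
    intro n
    refine ContinuousLinearMap.opNorm_le_bound _ zero_le_one fun y => ?_
    simp only [L, smul_apply, ContinuousLinearMap.id_apply, norm_smul]
    gcongr
    rw [Real.norm_of_nonneg (by positivity)]
    exact div_le_one_of_le₀ (by linarith [(Nat.cast_nonneg n : (0 : ℝ) ≤ n)]) (by positivity)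
  let K : ℕ → (Fin d → ℝ) → ℝ := fun n => χ ∘ L n
  have hχ : ContDiff ℝ ∞ (χ : (Fin d → ℝ) → ℝ) := χ.contDiff
  have hK : ∀ n, ContDiff ℝ ∞ (K n) := fun n => hχ.comp (L n).contDiff
  have hKb : ∀ k : ℕ, ∃ C, ∀ n x, ‖iteratedFDeriv ℝ k (K n) x‖ ≤ C := by
    intro k
    have hk : ContDiff ℝ k (χ : (Fin d → ℝ) → ℝ) := χ.contDiff
    obtain ⟨C, hC⟩ := (χ.hasCompactSupport.iteratedFDeriv (𝕜 := ℝ) k).exists_bound_of_continuous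
      (hk.continuous_iteratedFDeriv le_rfl)
    refine ⟨C, fun n x => ?_⟩
    simp only [K]
    rw [ContinuousLinearMap.iteratedFDeriv_comp_right (L n) hk x le_rfl]
    refine (ContinuousMultilinearMap.norm_compContinuousLinearMap_le _ _).trans ?_
    have h0 : 0 ≤ C := (norm_nonneg _).trans (hC 0)
    calc _ ≤ C * 1 := by
          refine mul_le_mul (hC _) ?_ (by positivity) h0
          exact Finset.prod_le_one (fun _ _ => norm_nonneg _) fun _ _ => hLn n
      _ = C := mul_one C
  let H : ℕ → (Fin d → ℝ) → ℝ := fun n y => K n y * h y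
  have hH : ∀ n, ContDiff ℝ 2 (H n) := fun n => (contDiff_infty.1 (hK n) 2).mul hc
  have hHb : ∀ k : ℕ, k ≤ 2 → ∃ C, ∀ n x, ‖iteratedFDeriv ℝ k (H n) x‖ ≤ C := by
    intro k hk
    choose C1 hC1 using hKb
    choose C2 hC2 using hb
    refine ⟨∑ i ∈ (Finset.range (k + 1)).attach, (k.choose i : ℝ) * C1 i * C2 (k - i) (by omega),
      fun n x => ?_⟩
    have hk2 : ContDiff ℝ k h := hc.of_le (by exact_mod_cast hk)
    have hk1 : ContDiff ℝ k (K n) := (hK n).of_le (by exact_mod_cast le_top)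
    refine (norm_iteratedFDeriv_mul_le hk1 hk2 x le_rfl).trans ?_
    rw [← Finset.sum_attach]
    refine Finset.sum_le_sum fun i _ => ?_
    have h0 : 0 ≤ C1 i := (norm_nonneg _).trans (hC1 i n x)
    exact mul_le_mul (mul_le_mul_of_nonneg_left (hC1 _ _ _) (by positivity)) (hC2 _ _ _)
      (norm_nonneg _) (by positivity)
  have hHs : ∀ n, HasCompactSupport (H n) := by
    intro n
    have hn : (1 / ((n : ℝ) + 1)) ≠ 0 := by positivity
    have h1 : HasCompactSupport (K n) :=
      χ.hasCompactSupport.comp_homeomorph (Homeomorph.smulOfNeZero _ hn)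
    exact h1.mul_right
  have hev : ∀ y, ∀ᶠ n in atTop, H n =ᶠ[𝓝 y] h := by
    intro y
    obtain ⟨N, hN⟩ := exists_nat_gt (‖y‖)
    filter_upwards [eventually_ge_atTop N] with n hn
    have h1 : ∀ᶠ z in 𝓝 y, ‖z‖ < n := by
      refine continuous_norm.continuousAt.eventually (Iio_mem_nhds (hN.trans_le ?_))
      exact_mod_cast hn
    filter_upwards [h1] with z hz
    have h2 : K n z = 1 := by
      refine χ.one_of_mem_closedBall ?_
      rw [mem_closedBall_zero_iff]
      simp only [L, smul_apply, ContinuousLinearMap.id_apply, norm_smul]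
      change _ ≤ (1 : ℝ)
      rw [Real.norm_of_nonneg (by positivity), one_div_mul_eq_div]
      exact div_le_one_of_le₀ (by linarith) (by positivity)
    simp [H, h2]
  have hpdev : ∀ (i : Fin d) (f g : (Fin d → ℝ) → ℝ) y, f =ᶠ[𝓝 y] g → pd i f =ᶠ[𝓝 y] pd i g := by
    intro i f g y hfg
    filter_upwards [hfg.fderiv (𝕜 := ℝ)] with z hz
    simp [pd, hz]
  obtain ⟨C0, hC0⟩ := hHb 0 (by norm_num)
  obtain ⟨C2, hC2⟩ := hHb 2 le_rfl
  refine Good.lim (H := H) hrt ha (fun s hs => (hν s t (h0r.trans hs.1) hs.2 htT).1)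
    (max C0 C2) (fun n => (hH n).continuous)
    (fun n i j => (pd_contDiff (n := 1) (m := 0) 
      (pd_contDiff (n := 2) (m := 1) (hH n) le_rfl j) le_rfl i).continuous) ?_ ?_ ?_ ?_ ?_
  · intro n x
    have := hC0 n x
    rw [norm_iteratedFDeriv_zero] at this
    exact this.trans (le_max_left _ _)
  · intro n i j x
    exact (pd_pd_le (hH n) i j x).trans ((hC2 n x).trans (le_max_right _ _))
  · intro y
    exact tendsto_const_nhds.congr' ((hev y).mono fun n hn => hn.eq_of_nhds.symm)
  · intro i j y
    exact tendsto_const_nhds.congr' ((hev y).mono fun n hn =>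
      (hpdev i _ _ y (hpdev j _ _ y hn)).eq_of_nhds.symm)
  · intro n
    exact good_compact x h0r hrt htT ha hν _ (hHs n) (hH n)

/-- Itô-type identity: for `h ∈ C_b^2(ℝ^d)` and `0 ≤ r ≤ t ≤ T`,
`∫ h(x+y) dν_{r,t}(y) = h(x) + ∫_r^t Σ_{i,j} a^{ij}(s) ∫ ∂_i∂_j h(x+y) dν_{s,t}(y) ds`. -/
theorem gaussian_ito_identity (T : ℝ) (hT : 0 < T)
    (d : ℕ) (hd : 0 < d)
    (a : ℝ → Fin d → Fin d → ℝ)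
    (ha_meas : ∀ i j, Measurable fun t => a t i j)
    (ha_symm : ∀ t ∈ Ioc (0:ℝ) T, ∀ i j, a t i j = a t j i)
    (ha_pos : ∀ t ∈ Ioc (0:ℝ) T, ∀ ξ : Fin d → ℝ,
      0 ≤ ∑ i, ∑ j, a t i j * ξ i * ξ j)
    (ha_int : IntegrableOn (aMax a) (Ioc (0:ℝ) T))
    (ν : ℝ → ℝ → Measure (Fin d → ℝ))
    (hν : IsGaussianFamily T a ν)
    (h : (Fin d → ℝ) → ℝ)
    (hh : ContDiff ℝ 2 h)
    (hh_bdd : ∀ n : ℕ, n ≤ 2 → ∃ C : ℝ, ∀ x, ‖iteratedFDeriv ℝ n h x‖ ≤ C) :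
    ∀ r t : ℝ, 0 ≤ r → r ≤ t → t ≤ T → ∀ x : Fin d → ℝ,
      (∫ y, h (x + y) ∂(ν r t)) =
        h x + ∫ s in Ioc r t,
          ∑ i, ∑ j, a s i j * ∫ y, pd i (pd j h) (x + y) ∂(ν s t) := by
  intro r t h0r hrt htT x
  refine (good_bdd x h0r hrt htT (fun i j => ?_) hν h hh hh_bdd).2
  refine IntegrableOn.mono_set ?_ (Ioc_subset_Ioc h0r htT)
  refine Integrable.mono' ha_int (ha_meas i j).aestronglyMeasurable (ae_of_all _ fun s => ?_)
  rw [Real.norm_eq_abs]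
  exact (le_ciSup (f := fun j => |a s i j|) (Set.finite_range _).bddAbove j).trans
    (le_ciSup (f := fun i => ⨆ j, |a s i j|) (Set.finite_range _).bddAbove i)

end
end

section
/- Let p ∈ [2,∞), let A = (A^{ij}) be a real symmetric positive semidefinite d×d matrix, and let u ∈ C_c^∞(ℝ^d; ℝ). Then ∫_{ℝ^d} |u(x)|^{p-2} u(x) Σ_{i,j} A^{ij} ∂_{x^i}∂_{x^j} u(x) dx = −(p−1) ∫_{ℝ^d} |u(x)|^{p-2} Σ_{i,j} A^{ij} ∂_{x^i} u(x) ∂_{x^j} u(x) dx, and in particular this quantity is ≤ 0. -/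
open MeasureTheory Set

noncomputable section

lemma hasDerivAt_absPow_mul (p : ℝ) (hp : 2 ≤ p) (t : ℝ) :
    HasDerivAt (fun t : ℝ => |t| ^ (p - 2) * t) ((p - 1) * |t| ^ (p - 2)) t := by
  have hc : Continuous (fun t : ℝ => |t| ^ (p - 2)) :=
    continuous_abs.rpow_const (fun _ => Or.inr (by linarith))
  by_cases ht : t = 0
  · subst ht
    have h0 : (p - 1) * |(0 : ℝ)| ^ (p - 2) = |(0 : ℝ)| ^ (p - 2) := by
      rcases eq_or_lt_of_le hp with h | h
      · subst h; norm_num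
      · rw [abs_zero, Real.zero_rpow (by linarith)]; simp
    rw [h0, hasDerivAt_iff_tendsto_slope]
    have h1 := (hc.tendsto 0).mono_left (nhdsWithin_le_nhds (s := {0}ᶜ))
    refine h1.congr' ?_
    filter_upwards [self_mem_nhdsWithin] with y hy
    have hy' : y ≠ 0 := hy
    simp [slope_def_field, hy']
  · have h := ((hasDerivAt_abs ht).rpow_const (p := p - 2)
      (Or.inl (abs_ne_zero.mpr ht))).mul (hasDerivAt_id t)
    convert! h using 1
    have e : |t| ^ (p - 2) = |t| ^ (p - 2 - 1) * |t| := by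
      rw [← Real.rpow_add_one (abs_ne_zero.mpr ht)]; ring_nf
    have e2 : ((SignType.sign t : SignType) : ℝ) * t = |t| := sign_mul_self t
    simp only [id, mul_one]
    rw [e, ← e2]
    ring

lemma pd_contDiff_s6 {d : ℕ} (i : Fin d) {u : (Fin d → ℝ) → ℝ} (hu : ContDiff ℝ (⊤ : ℕ∞) u) :
    ContDiff ℝ (⊤ : ℕ∞) (pd i u) :=
  (hu.fderiv_right (m := (⊤ : ℕ∞)) (by norm_cast)).clm_apply contDiff_const

lemma ibp_term {d : ℕ} (p : ℝ) (hp : 2 ≤ p) (u : (Fin d → ℝ) → ℝ)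
    (hu : ContDiff ℝ (⊤ : ℕ∞) u) (hs : HasCompactSupport u) (i j : Fin d) :
    Integrable (fun x => |u x| ^ (p - 2) * u x * pd i (pd j u) x) ∧
    Integrable (fun x => |u x| ^ (p - 2) * (pd i u x * pd j u x)) ∧
    ∫ x, |u x| ^ (p - 2) * u x * pd i (pd j u) x
      = -(p - 1) * ∫ x, |u x| ^ (p - 2) * (pd i u x * pd j u x) := by
  have hj := pd_contDiff_s6 j hu
  have hi := pd_contDiff_s6 i hu
  have hij := pd_contDiff_s6 i hj
  have hc : Continuous (fun x => |u x| ^ (p - 2)) :=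
    hu.continuous.abs.rpow_const (fun _ => Or.inr (by linarith))
  have hsj : HasCompactSupport (pd j u) := hs.fderiv_apply (𝕜 := ℝ) _
  have hF : ∀ x, HasFDerivAt (fun x => |u x| ^ (p - 2) * u x)
      (((p - 1) * |u x| ^ (p - 2)) • fderiv ℝ u x) x := fun x =>
    (hasDerivAt_absPow_mul p hp (u x)).comp_hasFDerivAt x
      ((hu.differentiable (by simp)) x).hasFDerivAt
  have I1 : Integrable (fun x => |u x| ^ (p - 2) * u x * pd i (pd j u) x) := by
    refine Continuous.integrable_of_hasCompactSupport
      ((hc.mul hu.continuous).mul hij.continuous) ?_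
    exact (hs.mul_left (f := fun x => |u x| ^ (p - 2))).mul_right
  have I2 : Integrable (fun x => |u x| ^ (p - 2) * (pd i u x * pd j u x)) := by
    refine Continuous.integrable_of_hasCompactSupport
      (hc.mul (hi.continuous.mul hj.continuous)) ?_
    exact (hsj.mul_left (f := pd i u)).mul_left
  have I3 : Integrable (fun x => |u x| ^ (p - 2) * u x * pd j u x) := by
    refine Continuous.integrable_of_hasCompactSupport
      ((hc.mul hu.continuous).mul hj.continuous) ?_
    exact hsj.mul_left
  have hf' : ∀ x, fderiv ℝ (fun x => |u x| ^ (p - 2) * u x) x (Pi.single i 1) * pd j u x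
      = (p - 1) * (|u x| ^ (p - 2) * (pd i u x * pd j u x)) := by
    intro x
    rw [(hF x).fderiv]
    simp only [pd, ContinuousLinearMap.smul_apply, smul_eq_mul]
    ring
  refine ⟨I1, I2, ?_⟩
  have key := integral_mul_fderiv_eq_neg_fderiv_mul_of_integrable (μ := volume)
    (f := fun x => |u x| ^ (p - 2) * u x) (g := pd j u) (v := Pi.single i 1)
    (by simp only [hf']; exact I2.const_mul _) I1 I3
    (fun x _ => (hF x).differentiableAt)
    (fun x _ => (hj.differentiable (by simp)) x)
  simp only [hf'] at key
  rw [integral_const_mul] at key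
  rw [neg_mul]
  exact key

/-- Integration by parts: for `p ≥ 2`, a symmetric positive semidefinite matrix `A`, and
`u ∈ C_c^∞(ℝ^d)`,
`∫ |u|^{p-2} u Σ A^{ij} ∂_i∂_j u dx = -(p-1) ∫ |u|^{p-2} Σ A^{ij} ∂_i u ∂_j u dx ≤ 0`. -/
theorem integration_by_parts (d : ℕ) (hd : 0 < d) (p : ℝ) (hp : 2 ≤ p)
    (A : Fin d → Fin d → ℝ)
    (hA_symm : ∀ i j, A i j = A j i)
    (hA_pos : ∀ ξ : Fin d → ℝ, 0 ≤ ∑ i, ∑ j, A i j * ξ i * ξ j)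
    (u : (Fin d → ℝ) → ℝ)
    (hu_smooth : ContDiff ℝ (⊤ : ℕ∞) u)
    (hu_supp : HasCompactSupport u) :
    (∫ x, |u x| ^ (p - 2) * u x * (∑ i, ∑ j, A i j * pd i (pd j u) x)) =
      -(p - 1) * ∫ x, |u x| ^ (p - 2) * (∑ i, ∑ j, A i j * pd i u x * pd j u x) ∧
    (∫ x, |u x| ^ (p - 2) * u x * (∑ i, ∑ j, A i j * pd i (pd j u) x)) ≤ 0 := by
  have T := fun i j => ibp_term p hp u hu_smooth hu_supp i j
  have main : (∫ x, |u x| ^ (p - 2) * u x * (∑ i, ∑ j, A i j * pd i (pd j u) x)) =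
      -(p - 1) * ∫ x, |u x| ^ (p - 2) * (∑ i, ∑ j, A i j * pd i u x * pd j u x) := by
    have e1 : ∀ x, |u x| ^ (p - 2) * u x * (∑ i, ∑ j, A i j * pd i (pd j u) x)
        = ∑ i, ∑ j, A i j * (|u x| ^ (p - 2) * u x * pd i (pd j u) x) := by
      intro x
      simp only [Finset.mul_sum]
      exact Finset.sum_congr rfl fun i _ => Finset.sum_congr rfl fun j _ => by ring
    have e2 : ∀ x, |u x| ^ (p - 2) * (∑ i, ∑ j, A i j * pd i u x * pd j u x)
        = ∑ i, ∑ j, A i j * (|u x| ^ (p - 2) * (pd i u x * pd j u x)) := by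
      intro x
      simp only [Finset.mul_sum]
      exact Finset.sum_congr rfl fun i _ => Finset.sum_congr rfl fun j _ => by ring
    simp only [e1, e2]
    rw [integral_finsetSum _ fun i _ => integrable_finsetSum _ fun j _ =>
        (T i j).1.const_mul _,
      integral_finsetSum _ fun i _ => integrable_finsetSum _ fun j _ =>
        (T i j).2.1.const_mul _, Finset.mul_sum]
    refine Finset.sum_congr rfl fun i _ => ?_
    rw [integral_finsetSum _ fun j _ => (T i j).1.const_mul _,
      integral_finsetSum _ fun j _ => (T i j).2.1.const_mul _, Finset.mul_sum]
    refine Finset.sum_congr rfl fun j _ => ?_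
    rw [integral_const_mul, integral_const_mul, (T i j).2.2]
    ring
  refine ⟨main, ?_⟩
  rw [main]
  have h : 0 ≤ ∫ x, |u x| ^ (p - 2) * (∑ i, ∑ j, A i j * pd i u x * pd j u x) :=
    integral_nonneg fun x => mul_nonneg (Real.rpow_nonneg (abs_nonneg _) _)
      (hA_pos fun i => pd i u x)
  exact mul_nonpos_of_nonpos_of_nonneg (by linarith) h

end
end
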